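/- arXiv:1207.5201 — 2 statements merged into one kernel-verified Lean document; each statement's English description precedes it below -/
import Mathlib

section
/- Let n ≥ 1, α > 0, and let f : [0, α) → ℝ be a continuous function with f(t) ≠ 0 for all t ∈ [0, α). If the function g(t) = t / f(t) is n-monotone on (0, α), then f(0) ≥ 0 and f is ⌊n/2⌋-concave on [0, α). -/
open Matrix
open scoped ComplexOrder

/-- A real function `h` is `n`-monotone on a set `I ⊆ ℝ` if for all Hermitian `n × n`
complex matrices `A, B` with spectrum (i.e. all eigenvalues) in `I`, `A ≤ B` in the
Loewner order (i.e. `B − A` positive semidefinite) implies `h(A) ≤ h(B)`, where `h` is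
applied via the continuous functional calculus `cfc`. -/
def NMonotoneOn (n : ℕ) (h : ℝ → ℝ) (I : Set ℝ) : Prop :=
  ∀ A B : Matrix (Fin n) (Fin n) ℂ, A.IsHermitian → B.IsHermitian →
    spectrum ℝ A ⊆ I → spectrum ℝ B ⊆ I →
    (B - A).PosSemidef → (cfc h B - cfc h A).PosSemidef

/-- A real function `h` is `n`-concave on a set `I ⊆ ℝ` if for all Hermitian `n × n`
complex matrices `A, B` with spectrum in `I` and all `λ ∈ [0,1]`,
`h(λA + (1−λ)B) ≥ λ h(A) + (1−λ) h(B)` in the Loewner order. -/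
def NConcaveOn (n : ℕ) (h : ℝ → ℝ) (I : Set ℝ) : Prop :=
  ∀ A B : Matrix (Fin n) (Fin n) ℂ, A.IsHermitian → B.IsHermitian →
    spectrum ℝ A ⊆ I → spectrum ℝ B ⊆ I →
    ∀ l : ℝ, l ∈ Set.Icc (0 : ℝ) 1 →
      (cfc h (l • A + (1 - l) • B) - (l • cfc h A + (1 - l) • cfc h B)).PosSemidef

/-!
Let `C` be a contraction and `X` a positive definite matrix, and put `T = X^{1/2} C`. Then
`T Tᴴ ≤ X`, so that `g(T Tᴴ) ≤ g(X)`. Writing `g(t) = t / f(t)`, the two sides are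
`T f(Tᴴ T)⁻¹ Tᴴ` and `X^{1/2} f(X)⁻¹ X^{1/2}`; cancelling `X^{1/2}` leaves
`C f(Cᴴ X C)⁻¹ Cᴴ ≤ f(X)⁻¹`, which by taking Schur complements is Jensen's operator inequality
`Cᴴ f(X) C ≤ f(Cᴴ X C)`. Concavity is the case of `X = A ⊕ B` and the column `C` with entries
`√l` and `√(1 - l)`, which doubles the dimension. The endpoint `0` is reached by continuity.
-/

open Filter Topology

theorem eventually_add_mem_Ioo {a b x : ℝ} (hx : x ∈ Set.Ico a b) :
    ∀ᶠ δ in 𝓝[>] 0, x + δ ∈ Set.Ioo a b := by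
  filter_upwards [Ioo_mem_nhdsGT (sub_pos.2 hx.2)] with δ hδ
  exact ⟨by linarith [hx.1, hδ.1], by linarith [hδ.2]⟩

section Matrix

open scoped MatrixOrder

variable {ι κ 𝕜 : Type*} [RCLike 𝕜]

theorem isHermitian_convexCombination {A B : Matrix ι ι 𝕜} (hA : A.IsHermitian)
    (hB : B.IsHermitian) (l : ℝ) : (l • A + (1 - l) • B).IsHermitian :=
  (hA.smul (.all l)).add (hB.smul (.all (1 - l)))

theorem isClosed_setOf_posSemidef [Finite ι] : IsClosed {A : Matrix ι ι 𝕜 | A.PosSemidef} := by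
  have := Fintype.ofFinite ι
  simp only [posSemidef_iff_dotProduct_mulVec, Set.ofPred_and, Set.ofPred_forall]
  exact (isClosed_eq continuous_id.matrix_conjTranspose continuous_id).inter
    (isClosed_iInter fun x ↦ isClosed_le continuous_const (by fun_prop))

theorem fromBlocks_le_fromBlocks_iff [Finite ι] [Finite κ] {A B : Matrix ι ι 𝕜}
    {D : Matrix κ κ 𝕜} : fromBlocks A 0 0 D ≤ fromBlocks B 0 0 D ↔ A ≤ B := by
  classical
  have := Fintype.ofFinite ι
  have := Fintype.ofFinite κ
  have hsub : fromBlocks B 0 0 D - fromBlocks A 0 0 D = fromBlocks (B - A) 0 0 0 := by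
    simp [sub_eq_add_neg, fromBlocks_neg, fromBlocks_add]
  rw [le_iff, le_iff, hsub]
  refine ⟨fun h ↦ h.submatrix Sum.inl, fun h ↦ ?_⟩
  have hpad := h.conjTranspose_mul_mul_same (fromCols 1 0 : Matrix ι (ι ⊕ κ) 𝕜)
  rw [conjTranspose_fromCols_eq_fromRows_conjTranspose, fromRows_mul, fromRows_mul_fromCols] at hpad
  simpa using hpad

variable [Fintype ι]

theorem conjTranspose_mul_mul_mono [Finite κ] {A B : Matrix ι ι 𝕜} (hAB : A ≤ B)
    (C : Matrix ι κ 𝕜) : Cᴴ * A * C ≤ Cᴴ * B * C := by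
  simpa only [le_iff, Matrix.mul_sub, Matrix.sub_mul] using
    (le_iff.1 hAB).conjTranspose_mul_mul_same C

variable [Fintype κ] [DecidableEq ι] [DecidableEq κ]

theorem conjTranspose_mul_mul_le_iff_of_posDef {P : Matrix κ κ 𝕜} {Q : Matrix ι ι 𝕜}
    (hP : P.PosDef) (hQ : Q.PosDef) (C : Matrix ι κ 𝕜) :
    Cᴴ * Q * C ≤ P ↔ C * P⁻¹ * Cᴴ ≤ Q⁻¹ := by
  have := hP.isUnit.invertible
  have := hQ.isUnit.invertible
  have := hQ.inv.isUnit.invertible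
  rw [le_iff, le_iff, ← PosDef.fromBlocks₂₂ _ C hP, hQ.inv.fromBlocks₁₁, inv_inv_of_invertible]

theorem mul_conjTranspose_le_one_iff {C : Matrix ι κ 𝕜} : C * Cᴴ ≤ 1 ↔ Cᴴ * C ≤ 1 := by
  simpa using (conjTranspose_mul_mul_le_iff_of_posDef (PosDef.one (n := κ)) PosDef.one C).symm

theorem mul_mul_conjTranspose_le_iff_of_isUnit {S A B : Matrix ι ι 𝕜} (hS : IsUnit S) :
    S * A * Sᴴ ≤ S * B * Sᴴ ↔ A ≤ B := by
  rw [le_iff, le_iff, ← Matrix.sub_mul, ← Matrix.mul_sub]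
  exact hS.posSemidef_star_right_conjugate_iff

theorem spectrum_fromBlocks_diagonal (A : Matrix ι ι 𝕜) (D : Matrix κ κ 𝕜) :
    spectrum ℝ (fromBlocks A 0 0 D) = spectrum ℝ A ∪ spectrum ℝ D := by
  ext x
  have hx : algebraMap ℝ _ x - fromBlocks A 0 0 D =
      fromBlocks (algebraMap ℝ _ x - A) 0 0 (algebraMap ℝ _ x - D) := by
    simp [Algebra.algebraMap_eq_smul_one, ← fromBlocks_one, fromBlocks_smul, fromBlocks_neg,
      fromBlocks_add, sub_eq_add_neg]
  rw [Set.mem_union, spectrum.mem_iff, spectrum.mem_iff, spectrum.mem_iff, hx,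
    isUnit_fromBlocks_zero₂₁, not_and_or]

theorem spectrum_submatrix_equiv (A : Matrix ι ι 𝕜) (e : κ ≃ ι) :
    spectrum ℝ (A.submatrix e e) = spectrum ℝ A :=
  AlgEquiv.spectrum_eq (reindexAlgEquiv ℝ 𝕜 e.symm) A

theorem isHermitian_algebraMap (c : ℝ) : (algebraMap ℝ (Matrix ι ι 𝕜) c).IsHermitian :=
  IsSelfAdjoint.algebraMap _ (.all c)

theorem spectrum_subset_Icc_iff {A : Matrix ι ι 𝕜} (hA : A.IsHermitian) {a b : ℝ} :
    spectrum ℝ A ⊆ Set.Icc a b ↔ A ∈ Set.Icc (algebraMap ℝ _ a) (algebraMap ℝ _ b) := by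
  rw [Set.mem_Icc, algebraMap_le_iff_le_spectrum (ha := hA),
    le_algebraMap_iff_spectrum_le (ha := hA)]
  exact forall₂_and

theorem exists_mem_Ico_spectrum_subset_Icc {A : Matrix ι ι 𝕜} {a b : ℝ} (hab : a < b)
    (hA : spectrum ℝ A ⊆ Set.Ico a b) : ∃ r ∈ Set.Ico a b, spectrum ℝ A ⊆ Set.Icc a r := by
  obtain ⟨r, hr, hmax⟩ := (A.finite_real_spectrum.insert a).isCompact.exists_isGreatest
    (Set.insert_nonempty a _)
  exact ⟨r, Set.insert_subset (Set.left_mem_Ico.2 hab) hA hr,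
    fun x hx ↦ ⟨(hA hx).1, hmax (Set.mem_insert_of_mem a hx)⟩⟩

theorem spectrum_subset_Ico_of_le {A B : Matrix ι ι 𝕜} {b : ℝ} (hb : 0 < b) (hA : 0 ≤ A)
    (hAB : A ≤ B) (hBs : spectrum ℝ B ⊆ Set.Ico 0 b) : spectrum ℝ A ⊆ Set.Ico 0 b := by
  have hBH : B.IsHermitian := (nonneg_iff_posSemidef.1 (hA.trans hAB)).1
  obtain ⟨r, hr, hBr⟩ := exists_mem_Ico_spectrum_subset_Icc hb hBs
  have hAr := (spectrum_subset_Icc_iff (a := 0) (nonneg_iff_posSemidef.1 hA).1).2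
    ⟨by simpa using hA, hAB.trans ((spectrum_subset_Icc_iff hBH).1 hBr).2⟩
  exact hAr.trans (Set.Icc_subset_Ico_right hr.2)

theorem spectrum_conjTranspose_mul_mul_subset_Ico {A : Matrix ι ι 𝕜} (hA : A.IsHermitian) {b : ℝ}
    (hb : 0 < b) (hAs : spectrum ℝ A ⊆ Set.Ico 0 b) {C : Matrix ι κ 𝕜} (hC : Cᴴ * C ≤ 1) :
    spectrum ℝ (Cᴴ * A * C) ⊆ Set.Ico 0 b := by
  obtain ⟨r, hr, hAr⟩ := exists_mem_Ico_spectrum_subset_Icc hb hAs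
  obtain ⟨hA0, hAr⟩ := (spectrum_subset_Icc_iff hA).1 hAr
  have h0 : algebraMap ℝ _ 0 ≤ Cᴴ * A * C := by
    simpa using conjTranspose_mul_mul_mono hA0 C
  have hle : Cᴴ * A * C ≤ algebraMap ℝ _ r :=
    calc Cᴴ * A * C ≤ Cᴴ * algebraMap ℝ _ r * C := conjTranspose_mul_mul_mono hAr C
      _ = r • (Cᴴ * C) := by simp [Algebra.algebraMap_eq_smul_one]
      _ ≤ r • 1 := smul_le_smul_of_nonneg_left hC hr.1
      _ = algebraMap ℝ _ r := (Algebra.algebraMap_eq_smul_one r).symm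
  exact ((spectrum_subset_Icc_iff (isHermitian_conjTranspose_mul_mul C hA)).2 ⟨h0, hle⟩).trans
    (Set.Icc_subset_Ico_right hr.2)

theorem spectrum_convexCombination_subset_Ico {A B : Matrix ι ι 𝕜} (hA : A.IsHermitian)
    (hB : B.IsHermitian) {a b : ℝ} (hab : a < b) (hAs : spectrum ℝ A ⊆ Set.Ico a b)
    (hBs : spectrum ℝ B ⊆ Set.Ico a b) {l : ℝ} (hl : l ∈ Set.Icc (0 : ℝ) 1) :
    spectrum ℝ (l • A + (1 - l) • B) ⊆ Set.Ico a b := by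
  obtain ⟨r, hr, hAr⟩ := exists_mem_Ico_spectrum_subset_Icc hab hAs
  obtain ⟨s, hs, hBs⟩ := exists_mem_Ico_spectrum_subset_Icc hab hBs
  have hAm := (spectrum_subset_Icc_iff hA).1
    (hAr.trans (Set.Icc_subset_Icc_right (le_max_left r s)))
  have hBm := (spectrum_subset_Icc_iff hB).1
    (hBs.trans (Set.Icc_subset_Icc_right (le_max_right r s)))
  have hcomb := (convex_Icc _ _) hAm hBm hl.1 (sub_nonneg.2 hl.2) (add_sub_cancel l 1)
  exact ((spectrum_subset_Icc_iff (isHermitian_convexCombination hA hB l)).2 hcomb).trans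
    (Set.Icc_subset_Ico_right (max_lt hr.2 hs.2))

theorem cfc_mul_eq_mul_cfc_of_mul_eq_mul {A : Matrix ι ι 𝕜} {B : Matrix κ κ 𝕜}
    (hA : A.IsHermitian) (hB : B.IsHermitian) {V : Matrix ι κ 𝕜} (hV : A * V = V * B)
    (f : ℝ → ℝ) : cfc f A * V = V * cfc f B := by
  set s := (A.finite_real_spectrum.union B.finite_real_spectrum).toFinset
  set p := Lagrange.interpolate s id f
  have hp : ∀ x ∈ spectrum ℝ A ∪ spectrum ℝ B, f x = p.eval x := fun x hx ↦
    (Lagrange.eval_interpolate_at_node (v := id) f (Set.injOn_id _) (by simpa [s] using hx)).symm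
  rw [cfc_congr fun x hx ↦ hp x (.inl hx), cfc_congr fun x hx ↦ hp x (.inr hx),
    cfc_polynomial p A hA.isSelfAdjoint, cfc_polynomial p B hB.isSelfAdjoint]
  have hpow (k : ℕ) : A ^ k * V = V * B ^ k := by
    induction k with
    | zero => simp
    | succ k ih =>
      rw [pow_succ', pow_succ', Matrix.mul_assoc, ih, ← Matrix.mul_assoc, hV, Matrix.mul_assoc]
  simp only [Polynomial.aeval_eq_sum_range, Matrix.sum_mul, Matrix.mul_sum, Matrix.smul_mul,
    Matrix.mul_smul, hpow]

theorem cfc_submatrix_equiv {A : Matrix ι ι 𝕜} (hA : A.IsHermitian) (f : ℝ → ℝ) (e : κ ≃ ι) :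
    cfc f (A.submatrix e e) = (cfc f A).submatrix e e := by
  let V : Matrix κ ι 𝕜 := submatrix 1 e id
  have hmul_V (M : Matrix κ κ 𝕜) : M * V = M.submatrix id e.symm := mul_submatrix_one e id M
  have hV_mul (M : Matrix ι ι 𝕜) : V * M = M.submatrix e id :=
    one_submatrix_mul e (Equiv.refl ι) M
  have hV := cfc_mul_eq_mul_cfc_of_mul_eq_mul (hA.submatrix e) hA (V := V)
    (by simp [hmul_V, hV_mul]) f
  rw [hmul_V, hV_mul] at hV
  simpa using congrArg (submatrix · id e) hV

theorem cfc_fromBlocks_diagonal {A : Matrix ι ι 𝕜} {D : Matrix κ κ 𝕜} (hA : A.IsHermitian)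
    (hD : D.IsHermitian) (f : ℝ → ℝ) :
    cfc f (fromBlocks A 0 0 D) = fromBlocks (cfc f A) 0 0 (cfc f D) := by
  have hAD : (fromBlocks A 0 0 D).IsHermitian := hA.fromBlocks (by simp) hD
  have hl := cfc_mul_eq_mul_cfc_of_mul_eq_mul hAD hA (V := fromRows 1 0)
    (by simp [fromBlocks_mul_fromRows, fromRows_mul]) f
  have hr := cfc_mul_eq_mul_cfc_of_mul_eq_mul hAD hD (V := fromRows 0 1)
    (by simp [fromBlocks_mul_fromRows, fromRows_mul]) f
  calc cfc f (fromBlocks A 0 0 D)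
      = cfc f (fromBlocks A 0 0 D) * fromCols (fromRows 1 0) (fromRows 0 1) := by
        simp [fromCols_fromRows_eq_fromBlocks]
    _ = fromBlocks (cfc f A) 0 0 (cfc f D) := by
        rw [mul_fromCols, hl, hr]
        simp [fromRows_mul, fromCols_fromRows_eq_fromBlocks]

theorem mul_cfc_conjTranspose_mul_self_mul_conjTranspose (T : Matrix ι κ 𝕜) (f : ℝ → ℝ) :
    T * cfc f (Tᴴ * T) * Tᴴ = cfc (fun t ↦ t * f t) (T * Tᴴ) := by
  have hT : (T * Tᴴ).IsHermitian := isHermitian_mul_conjTranspose_self T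
  have hcont (g : ℝ → ℝ) : ContinuousOn g (spectrum ℝ (T * Tᴴ)) :=
    (T * Tᴴ).finite_real_spectrum.continuousOn g
  rw [← cfc_mul_eq_mul_cfc_of_mul_eq_mul hT (isHermitian_conjTranspose_mul_self T)
    (Matrix.mul_assoc T Tᴴ T) f, Matrix.mul_assoc]
  simp_rw [mul_comm _ (f _)]
  rw [cfc_mul f (fun t ↦ t) _ (hcont _) (hcont _), cfc_id' ℝ _ hT.isSelfAdjoint]

theorem posDef_cfc {A : Matrix ι ι 𝕜} (hA : A.IsHermitian) {f : ℝ → ℝ}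
    (hf : ∀ x ∈ spectrum ℝ A, 0 < f x) : (cfc f A).PosDef := by
  have hnonneg : (cfc f A).PosSemidef :=
    nonneg_iff_posSemidef.1 (cfc_nonneg fun x hx ↦ (hf x hx).le)
  exact hnonneg.posDef_iff_isUnit.2 <|
    (isUnit_cfc_iff f A (A.finite_real_spectrum.continuousOn f) hA.isSelfAdjoint).2
      fun x hx ↦ (hf x hx).ne'

theorem posDef_of_forall_mem_spectrum_pos {A : Matrix ι ι 𝕜} (hA : A.IsHermitian)
    (hpos : ∀ x ∈ spectrum ℝ A, 0 < x) : A.PosDef := by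
  simpa only [cfc_id' ℝ A hA.isSelfAdjoint] using posDef_cfc hA hpos

theorem inv_cfc {A : Matrix ι ι 𝕜} (hA : A.IsHermitian) {f : ℝ → ℝ}
    (hf : ∀ x ∈ spectrum ℝ A, f x ≠ 0) : (cfc f A)⁻¹ = cfc (fun x ↦ (f x)⁻¹) A := by
  rw [nonsing_inv_eq_ringInverse, cfc_inv f A hf (A.finite_real_spectrum.continuousOn f)
    hA.isSelfAdjoint]

theorem tendsto_cfc_of_forall_mem_spectrum {X : Type*} {l : Filter X} {A : Matrix ι ι 𝕜}
    (hA : A.IsHermitian) {F : X → ℝ → ℝ} {f : ℝ → ℝ}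
    (hF : ∀ x ∈ spectrum ℝ A, Tendsto (F · x) l (𝓝 (f x))) :
    Tendsto (fun t ↦ cfc (F t) A) l (𝓝 (cfc f A)) := by
  simp only [hA.cfc_eq, IsHermitian.cfc, Unitary.conjStarAlgAut_apply]
  refine (tendsto_const_nhds.mul ?_).mul tendsto_const_nhds
  have hdiag : Continuous (diagonal : (ι → 𝕜) → Matrix ι ι 𝕜) := by fun_prop
  refine (hdiag.tendsto _).comp (tendsto_pi_nhds.2 fun i ↦ ?_)
  exact (RCLike.continuous_ofReal.tendsto _).comp (hF _ (hA.eigenvalues_mem_spectrum_real i))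

theorem cfc_add_algebraMap {A : Matrix ι ι 𝕜} (hA : A.IsHermitian) (f : ℝ → ℝ) (δ : ℝ) :
    cfc f (A + algebraMap ℝ _ δ) = cfc (fun x ↦ f (x + δ)) A := by
  rw [cfc_comp' f (· + δ) A ((A.finite_real_spectrum.image _).continuousOn f) (by fun_prop)
    hA.isSelfAdjoint, cfc_add_const δ (fun x ↦ x) A (by fun_prop) hA.isSelfAdjoint,
    cfc_id' ℝ A hA.isSelfAdjoint]

theorem tendsto_cfc_add_algebraMap {A : Matrix ι ι 𝕜} (hA : A.IsHermitian) {f : ℝ → ℝ} {a b : ℝ}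
    (hf : ContinuousOn f (Set.Ico a b)) (hAs : spectrum ℝ A ⊆ Set.Ico a b) :
    Tendsto (fun δ ↦ cfc f (A + algebraMap ℝ _ δ)) (𝓝[>] 0) (𝓝 (cfc f A)) := by
  simp only [cfc_add_algebraMap hA]
  refine tendsto_cfc_of_forall_mem_spectrum hA fun x hx ↦ ?_
  have hadd : Tendsto (x + ·) (𝓝[>] 0) (𝓝 x) := by
    simpa using ((continuous_const_add x).tendsto 0).mono_left nhdsWithin_le_nhds
  exact (hf x (hAs hx)).tendsto.comp <| tendsto_nhdsWithin_iff.2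
    ⟨hadd, (eventually_add_mem_Ioo (hAs hx)).mono fun _ h ↦ Set.Ioo_subset_Ico_self h⟩

theorem eventually_spectrum_add_algebraMap_subset_Ioo {A : Matrix ι ι 𝕜} {a b : ℝ}
    (hAs : spectrum ℝ A ⊆ Set.Ico a b) :
    ∀ᶠ δ in 𝓝[>] (0 : ℝ), spectrum ℝ (A + algebraMap ℝ _ δ) ⊆ Set.Ioo a b := by
  have hδ := (eventually_all_finite A.finite_real_spectrum).2 fun x hx ↦
    eventually_add_mem_Ioo (hAs hx)
  filter_upwards [hδ] with δ hδ
  rw [← spectrum.add_singleton_eq, Set.add_singleton]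
  exact Set.image_subset_iff.2 hδ

section NMonotone

variable {n : ℕ} {h : ℝ → ℝ} {I : Set ℝ}

theorem NMonotoneOn.cfc_le_cfc_of_card_eq (hh : NMonotoneOn n h I) (hι : Fintype.card ι = n)
    {A B : Matrix ι ι ℂ} (hA : A.IsHermitian) (hB : B.IsHermitian) (hAI : spectrum ℝ A ⊆ I)
    (hBI : spectrum ℝ B ⊆ I) (hAB : A ≤ B) : cfc h A ≤ cfc h B := by
  have e : Fin n ≃ ι := Fintype.equivOfCardEq (by simp [hι])
  have hle := hh (A.submatrix e e) (B.submatrix e e) (hA.submatrix e) (hB.submatrix e)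
    (by rwa [spectrum_submatrix_equiv]) (by rwa [spectrum_submatrix_equiv])
    ((le_iff.1 hAB).submatrix e)
  rw [cfc_submatrix_equiv hA, cfc_submatrix_equiv hB] at hle
  exact (posSemidef_submatrix_equiv e).1 hle

theorem NMonotoneOn.cfc_le_cfc (hh : NMonotoneOn n h I) (hι : Fintype.card ι ≤ n)
    {A B : Matrix ι ι ℂ} (hA : A.IsHermitian) (hB : B.IsHermitian) (hAI : spectrum ℝ A ⊆ I)
    (hBI : spectrum ℝ B ⊆ I) (hAB : A ≤ B) : cfc h A ≤ cfc h B := by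
  cases isEmpty_or_nonempty ι
  · exact (Subsingleton.elim _ _).le
  obtain ⟨c, hc⟩ : (spectrum ℝ A).Nonempty :=
    ⟨_, hA.eigenvalues_mem_spectrum_real (Classical.arbitrary ι)⟩
  let D : Matrix (Fin (n - Fintype.card ι)) (Fin (n - Fintype.card ι)) ℂ := algebraMap ℝ _ c
  have hD : D.IsHermitian := isHermitian_algebraMap c
  have hDI : spectrum ℝ D ⊆ I :=
    (CFC.spectrum_algebraMap_subset c).trans (Set.singleton_subset_iff.2 (hAI hc))
  have hle := hh.cfc_le_cfc_of_card_eq (by simp [Nat.add_sub_cancel' hι])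
    (hA.fromBlocks conjTranspose_zero hD) (hB.fromBlocks conjTranspose_zero hD)
    ((spectrum_fromBlocks_diagonal A D).trans_subset (Set.union_subset hAI hDI))
    ((spectrum_fromBlocks_diagonal B D).trans_subset (Set.union_subset hBI hDI))
    (fromBlocks_le_fromBlocks_iff.2 hAB)
  rw [cfc_fromBlocks_diagonal hA hD, cfc_fromBlocks_diagonal hB hD] at hle
  exact fromBlocks_le_fromBlocks_iff.1 hle

theorem NMonotoneOn.monotoneOn (hh : NMonotoneOn n h I) (hn : 1 ≤ n) : MonotoneOn h I := by
  intro x hx y hy hxy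
  have hI {z : ℝ} (hz : z ∈ I) : spectrum ℝ (algebraMap ℝ (Matrix Unit Unit ℂ) z) ⊆ I :=
    (CFC.spectrum_algebraMap_subset z).trans (Set.singleton_subset_iff.2 hz)
  have hle := hh.cfc_le_cfc (ι := Unit) (by simpa) (isHermitian_algebraMap x)
    (isHermitian_algebraMap y) (hI hx) (hI hy) (algebraMap_mono _ hxy)
  rw [cfc_algebraMap x h, cfc_algebraMap y h] at hle
  exact (algebraMap_le_algebraMap).1 hle

theorem NMonotoneOn.Ico_of_Ioo {a b : ℝ} (hh : NMonotoneOn n h (Set.Ioo a b))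
    (hc : ContinuousOn h (Set.Ico a b)) : NMonotoneOn n h (Set.Ico a b) := by
  intro A B hA hB hAs hBs hAB
  refine isClosed_setOf_posSemidef.mem_of_tendsto
    ((tendsto_cfc_add_algebraMap hB hc hBs).sub (tendsto_cfc_add_algebraMap hA hc hAs)) ?_
  filter_upwards [eventually_spectrum_add_algebraMap_subset_Ioo hAs,
    eventually_spectrum_add_algebraMap_subset_Ioo hBs] with δ hAδ hBδ
  exact hh _ _ (hA.add (isHermitian_algebraMap δ)) (hB.add (isHermitian_algebraMap δ)) hAδ hBδ
    (by simpa using hAB)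

theorem NConcaveOn.Ico_of_Ioo {a b : ℝ} (hab : a < b) (hh : NConcaveOn n h (Set.Ioo a b))
    (hc : ContinuousOn h (Set.Ico a b)) : NConcaveOn n h (Set.Ico a b) := by
  intro A B hA hB hAs hBs l hl
  have hshift (δ : ℝ) : l • (A + algebraMap ℝ _ δ) + (1 - l) • (B + algebraMap ℝ _ δ) =
      l • A + (1 - l) • B + algebraMap ℝ _ δ := by module
  refine isClosed_setOf_posSemidef.mem_of_tendsto
    ((tendsto_cfc_add_algebraMap (isHermitian_convexCombination hA hB l) hc
      (spectrum_convexCombination_subset_Ico hA hB hab hAs hBs hl)).sub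
      (((tendsto_cfc_add_algebraMap hA hc hAs).const_smul l).add
        ((tendsto_cfc_add_algebraMap hB hc hBs).const_smul (1 - l)))) ?_
  filter_upwards [eventually_spectrum_add_algebraMap_subset_Ioo hAs,
    eventually_spectrum_add_algebraMap_subset_Ioo hBs] with δ hAδ hBδ
  rw [← hshift]
  exact hh _ _ (hA.add (isHermitian_algebraMap δ)) (hB.add (isHermitian_algebraMap δ)) hAδ hBδ l hl

end NMonotone

section Jensen

variable {n : ℕ} {α : ℝ} {f : ℝ → ℝ}

theorem NMonotoneOn.mul_cfc_mul_conjTranspose_le {k : ℝ → ℝ}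
    (hk : NMonotoneOn n (fun t ↦ t * k t) (Set.Ico 0 α)) (hα : 0 < α)
    (hι : Fintype.card ι ≤ n) {X : Matrix ι ι ℂ} (hX : X.PosDef)
    (hXs : spectrum ℝ X ⊆ Set.Ico 0 α) {C : Matrix ι κ ℂ} (hC : Cᴴ * C ≤ 1) :
    C * cfc k (Cᴴ * X * C) * Cᴴ ≤ cfc k X := by
  set S := CFC.sqrt X
  have hS : S.PosDef := hX.isStrictlyPositive.sqrt.posDef
  have hSH : Sᴴ = S := hS.isHermitian
  have hSS : S * S = X := CFC.sqrt_mul_sqrt_self X hX.posSemidef.nonneg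
  have hTle : (S * C) * (S * C)ᴴ ≤ X := by
    simpa only [← hSS, conjTranspose_mul, hSH, Matrix.mul_assoc, Matrix.one_mul] using
      conjTranspose_mul_mul_mono (mul_conjTranspose_le_one_iff.2 hC) S
  have hTs : spectrum ℝ ((S * C) * (S * C)ᴴ) ⊆ Set.Ico 0 α :=
    spectrum_subset_Ico_of_le hα (posSemidef_self_mul_conjTranspose (S * C)).nonneg hTle hXs
  refine (mul_mul_conjTranspose_le_iff_of_isUnit hS.isUnit).1 ?_
  calc S * (C * cfc k (Cᴴ * X * C) * Cᴴ) * Sᴴ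
      = (S * C) * cfc k ((S * C)ᴴ * (S * C)) * (S * C)ᴴ := by
        simp only [← hSS, conjTranspose_mul, hSH, Matrix.mul_assoc]
    _ = cfc (fun t ↦ t * k t) ((S * C) * (S * C)ᴴ) :=
        mul_cfc_conjTranspose_mul_self_mul_conjTranspose (S * C) k
    _ ≤ cfc (fun t ↦ t * k t) X :=
        hk.cfc_le_cfc hι (isHermitian_mul_conjTranspose_self (S * C)) hX.isHermitian hTs hXs hTle
    _ = S * cfc k X * Sᴴ := by
        simpa only [hSH, hSS] using
          (mul_cfc_conjTranspose_mul_self_mul_conjTranspose S k).symm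

theorem NMonotoneOn.conjTranspose_mul_cfc_mul_le
    (hg : NMonotoneOn n (fun t ↦ t / f t) (Set.Ico 0 α)) (hpos : ∀ t ∈ Set.Ico 0 α, 0 < f t)
    (hα : 0 < α) (hι : Fintype.card ι ≤ n) {X : Matrix ι ι ℂ} (hX : X.PosDef)
    (hXs : spectrum ℝ X ⊆ Set.Ico 0 α) {C : Matrix ι κ ℂ} (hC : Cᴴ * C ≤ 1) :
    Cᴴ * cfc f X * C ≤ cfc f (Cᴴ * X * C) := by
  have hY : (Cᴴ * X * C).IsHermitian := isHermitian_conjTranspose_mul_mul C hX.isHermitian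
  have hXpos : ∀ x ∈ spectrum ℝ X, 0 < f x := fun x hx ↦ hpos x (hXs hx)
  have hYpos : ∀ y ∈ spectrum ℝ (Cᴴ * X * C), 0 < f y := fun y hy ↦
    hpos y (spectrum_conjTranspose_mul_mul_subset_Ico hX.isHermitian hα hXs hC hy)
  rw [conjTranspose_mul_mul_le_iff_of_posDef (posDef_cfc hY hYpos)
    (posDef_cfc hX.isHermitian hXpos), inv_cfc hY fun y hy ↦ (hYpos y hy).ne',
    inv_cfc hX.isHermitian fun x hx ↦ (hXpos x hx).ne']
  simp only [div_eq_mul_inv] at hg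
  exact hg.mul_cfc_mul_conjTranspose_le hα hι hX hXs hC

theorem NMonotoneOn.nConcaveOn_Ioo {m : ℕ} (hmn : 2 * m ≤ n)
    (hg : NMonotoneOn n (fun t ↦ t / f t) (Set.Ico 0 α)) (hpos : ∀ t ∈ Set.Ico 0 α, 0 < f t)
    (hα : 0 < α) : NConcaveOn m f (Set.Ioo 0 α) := by
  intro A B hA hB hAs hBs l hl
  let C : Matrix (Fin m ⊕ Fin m) (Fin m) ℂ := fromRows (√l • 1) (√(1 - l) • 1)
  have compress_fromBlocks (P Q : Matrix (Fin m) (Fin m) ℂ) :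
      Cᴴ * fromBlocks P 0 0 Q * C = l • P + (1 - l) • Q := by
    simp [C, conjTranspose_fromRows_eq_fromCols_conjTranspose, Matrix.mul_assoc,
      fromBlocks_mul_fromRows, fromCols_mul_fromRows, smul_smul, Real.mul_self_sqrt hl.1,
      Real.mul_self_sqrt (sub_nonneg.2 hl.2)]
  have hC : Cᴴ * C = 1 := by
    simpa only [fromBlocks_one, Matrix.mul_one, ← add_smul, add_sub_cancel, one_smul] using
      compress_fromBlocks 1 1
  have hXs : spectrum ℝ (fromBlocks A 0 0 B) ⊆ Set.Ioo 0 α :=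
    (spectrum_fromBlocks_diagonal A B).trans_subset (Set.union_subset hAs hBs)
  have hX : (fromBlocks A 0 0 B).PosDef := posDef_of_forall_mem_spectrum_pos
    (hA.fromBlocks conjTranspose_zero hB) fun x hx ↦ (hXs hx).1
  have hjensen := hg.conjTranspose_mul_cfc_mul_le hpos hα (by simpa [← two_mul]) hX
    (hXs.trans Set.Ioo_subset_Ico_self) hC.le
  rwa [cfc_fromBlocks_diagonal hA hB, compress_fromBlocks, compress_fromBlocks] at hjensen

end Jensen

end Matrix

theorem pos_of_monotoneOn_div {f : ℝ → ℝ} {α : ℝ} (hg : MonotoneOn (fun t ↦ t / f t) (Set.Ico 0 α))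
    (hfc : ContinuousOn f (Set.Ico 0 α)) (hfne : ∀ t ∈ Set.Ico 0 α, f t ≠ 0) {t : ℝ}
    (ht : t ∈ Set.Ico 0 α) : 0 < f t := by
  have h0 : (0 : ℝ) ∈ Set.Ico 0 α := Set.left_mem_Ico.2 (ht.1.trans_lt ht.2)
  have nonneg_of_mem_Ioo {x : ℝ} (hx : x ∈ Set.Ioo 0 α) : 0 ≤ f x := by
    have : 0 ≤ x / f x := by simpa using hg h0 (Set.Ioo_subset_Ico_self hx) hx.1.le
    exact (div_nonneg_iff.1 this).elim And.right fun h ↦ absurd h.1 hx.1.not_ge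
  have ht_closure : t ∈ closure (Set.Ioo 0 α) := by
    rw [closure_Ioo (ht.1.trans_lt ht.2).ne]
    exact Set.Ico_subset_Icc_self ht
  have hft : 0 ≤ f t := ContinuousWithinAt.closure_le ht_closure continuousWithinAt_const
    ((hfc t ht).mono Set.Ioo_subset_Ico_self) fun _ ↦ nonneg_of_mem_Ioo
  exact hft.lt_of_ne' (hfne t ht)

/-- If `f : [0, α) → ℝ` is continuous and nonvanishing and `g(t) = t / f(t)` is
`n`-monotone on `(0, α)`, then `f(0) ≥ 0` and `f` is `⌊n/2⌋`-concave on `[0, α)`. -/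
theorem quotient_monotone_implies_concave
    (n : ℕ) (hn : 1 ≤ n) (α : ℝ) (hα : 0 < α) (f : ℝ → ℝ)
    (hfc : ContinuousOn f (Set.Ico 0 α))
    (hfne : ∀ t ∈ Set.Ico (0 : ℝ) α, f t ≠ 0)
    (hmono : NMonotoneOn n (fun t => t / f t) (Set.Ioo 0 α)) :
    0 ≤ f 0 ∧ NConcaveOn (n / 2) f (Set.Ico 0 α) := by
  have hg := hmono.Ico_of_Ioo (continuousOn_id.div hfc hfne)
  have hpos : ∀ t ∈ Set.Ico 0 α, 0 < f t := fun _ ↦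
    pos_of_monotoneOn_div (hg.monotoneOn hn) hfc hfne
  have hconc := hg.nConcaveOn_Ioo (m := n / 2) (by omega) hpos hα
  exact ⟨(hpos 0 (Set.left_mem_Ico.2 hα)).le, hconc.Ico_of_Ioo hα hfc⟩
end

section
/- Let f be a strictly positive continuous function on (0, ∞) and suppose g(t) = t / f(t) is differentiable on (0, ∞). Fix s ∈ [0, 1] and define the positive linear functional φ on M₂(ℂ) by φ(X) = Tr(diag(s, 1) · X). Suppose that φ(A) ≤ φ(f(A)^{1/2} g(B) f(A)^{1/2}) for all positive definite Hermitian matrices A, B ∈ M₂(ℂ) with A ≤ B. Then for all λ > μ > 0: √(g'(λ) g'(μ)) · (λ − μ) ≥ ((1 − s)/(1 + s)) · (g(λ) − g(μ)). -/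
open Matrix
open scoped ComplexOrder

/-!
To first order `g(A + tH)` changes by `t • (L ⊙ H)`, where `A = diag(a₀, a₁)` has distinct entries
and `L` is the Loewner matrix of divided differences of `g` at the `aᵢ`. Since
`f(A)^{1/2} g(A) f(A)^{1/2} = A`, the trace inequality is an equality at `B = A`, so its derivative
along every positive semidefinite direction `H` is nonnegative. Rank-one directions `H`, rescaled by
`f(A)^{-1/2}`, turn this into positivity of `W ⊙ L`, where `W` is the density of the functional, and
the determinant of `W ⊙ L` compares `g'(a₀) g'(a₁)` with the squared difference quotient. The
trace inequality is unitarily covariant in `W`, and the Hadamard unitary gives `diag(s, 1)` the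
diagonal entries `(1 + s) / 2` and the off-diagonal entries `(s - 1) / 2`.
-/

theorem isHermitian_diagonal_ofReal {n : Type*} [DecidableEq n] (a : n → ℝ) :
    (diagonal fun i => (a i : ℂ)).IsHermitian :=
  isHermitian_diagonal_iff.2 fun i => Complex.conj_ofReal (a i)

theorem mul_apply_swap_of_isHermitian {n : Type*} {M : Matrix n n ℂ} (hM : M.IsHermitian)
    (i j : n) : M i j * M j i = Complex.normSq (M i j) := by
  rw [← hM.apply j i]
  exact Complex.mul_conj _

theorem spectrum_fin_two_subset_pair {K L : Type*} [Field K] [Field L] [Algebra K L]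
    {M : Matrix (Fin 2) (Fin 2) L} {x y : K} (htrace : M.trace = algebraMap K L (x + y))
    (hdet : M.det = algebraMap K L (x * y)) : spectrum K M ⊆ {x, y} := by
  intro z hz
  have hroot : (z - x) * (z - y) = 0 := by
    have hchar := mem_spectrum_iff_isRoot_charpoly.1 (spectrum.algebraMap_mem L hz)
    rw [charpoly_fin_two, htrace, hdet] at hchar
    refine (algebraMap K L).injective ?_
    simp only [Polynomial.IsRoot.def, Polynomial.eval_add, Polynomial.eval_sub, Polynomial.eval_pow,
      Polynomial.eval_mul, Polynomial.eval_X, Polynomial.eval_C, map_mul, map_add, map_sub,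
      map_zero] at hchar ⊢
    linear_combination hchar
  simpa [sub_eq_zero] using hroot

theorem spectrum_fin_two_subset_of_sq_eq_discr {M : Matrix (Fin 2) (Fin 2) ℂ}
    (hM : M.IsHermitian) {δ : ℝ}
    (hδ : δ ^ 2 = ((M 0 0).re - (M 1 1).re) ^ 2 + 4 * Complex.normSq (M 0 1)) :
    spectrum ℝ M ⊆ {((M 0 0).re + (M 1 1).re + δ) / 2, ((M 0 0).re + (M 1 1).re - δ) / 2} := by
  have h0 : ((M 0 0).re : ℂ) = M 0 0 := hM.coe_re_apply_self 0
  have h1 : ((M 1 1).re : ℂ) = M 1 1 := hM.coe_re_apply_self 1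
  have hδ' : (δ : ℂ) ^ 2 = (M 0 0 - M 1 1) ^ 2 + 4 * (M 0 1 * M 1 0) := by
    rw [mul_apply_swap_of_isHermitian hM, ← h0, ← h1]
    exact_mod_cast hδ
  refine spectrum_fin_two_subset_pair ?_ ?_
  · rw [trace_fin_two, Complex.coe_algebraMap]
    push_cast
    rw [h0, h1]
    ring
  · rw [det_fin_two, Complex.coe_algebraMap]
    push_cast
    rw [h0, h1]
    linear_combination (1 / 4 : ℂ) * hδ'

theorem cfc_eq_newton_interpolation {R : Type*} [Ring R] [StarRing R] [TopologicalSpace R]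
    [Algebra ℝ R] {p : R → Prop} [ContinuousFunctionalCalculus ℝ R p] {r : R} (hr : p r) {x y : ℝ}
    (hspec : spectrum ℝ r ⊆ {x, y}) (g : ℝ → ℝ) :
    cfc g r = algebraMap ℝ R (g x) + slope g x y • (r - algebraMap ℝ R x) := by
  have hnewton : (spectrum ℝ r).EqOn g fun z => g x + slope g x y * (z - x) := fun z hz => by
    rcases hspec hz with rfl | rfl
    · simp
    · simpa [mul_comm, eq_comm, add_comm] using sub_smul_slope_vadd g x z
  rw [cfc_congr hnewton, cfc_const_add _ _ _, cfc_const_mul _ _ _,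
    cfc_sub _ _ _, cfc_id' ℝ r, cfc_const _ r]

section Matrix

variable {n : Type*} [Fintype n] [DecidableEq n]

theorem cfc_diagonal_ofReal (h : ℝ → ℝ) (a : n → ℝ) :
    cfc h (diagonal fun i => (a i : ℂ)) = diagonal fun i => (h (a i) : ℂ) := by
  have hspec : spectrum ℝ (diagonal fun i => (a i : ℂ)) ⊆ Set.range a := fun x hx => by
    have := spectrum.algebraMap_mem ℂ hx
    simpa [spectrum_diagonal] using this
  let p := Lagrange.interpolate (Finset.univ.image a) id h
  have hp : ∀ i, p.eval (a i) = h (a i) := fun i =>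
    Lagrange.eval_interpolate_at_node _ Function.injective_id.injOn (by simp)
  have heq : (spectrum ℝ (diagonal fun i => (a i : ℂ))).EqOn h p.eval := fun x hx => by
    obtain ⟨i, rfl⟩ := hspec hx
    exact (hp i).symm
  rw [cfc_congr heq, cfc_polynomial p _ (isHermitian_diagonal_ofReal a).isSelfAdjoint,
    ← diagonalAlgHom_apply ℝ, Polynomial.aeval_algHom_apply]
  refine congrArg diagonal (funext fun i => ?_)
  rw [← hp, Polynomial.aeval_pi_apply₂]
  exact Polynomial.aeval_algebraMap_apply_eq_algebraMap_eval _ _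

theorem cfc_mul_mul_conjTranspose {U : Matrix n n ℂ} (hU : U ∈ unitaryGroup n ℂ) (h : ℝ → ℝ)
    {A : Matrix n n ℂ} (hA : A.IsHermitian) :
    cfc h (U * A * Uᴴ) = U * cfc h A * Uᴴ :=
  (StarAlgHomClass.map_cfc (Unitary.conjStarAlgAut ℂ (Matrix n n ℂ) ⟨U, hU⟩) h A
    (A.finite_real_spectrum.continuousOn h) (by fun_prop : Continuous fun X => U * X * Uᴴ)
    hA (isHermitian_mul_mul_conjTranspose U hA)).symm

end Matrix

theorem nonneg_of_hasDerivAt_of_forall_le {F : ℝ → ℂ} {F' : ℂ} {x : ℝ} (hF : HasDerivAt F F' x)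
    (hle : ∀ y, x < y → F x ≤ F y) : 0 ≤ F' := by
  refine ge_of_tendsto hF.tendsto_slope_zero_right ?_
  filter_upwards [self_mem_nhdsWithin] with t ht
  have ht : 0 < t := ht
  exact smul_nonneg (inv_pos.2 ht).le (sub_nonneg.2 (hle _ (lt_add_of_pos_right x ht)))

theorem exists_hasDerivAt_sq_eq {D : ℝ → ℝ} {c d x : ℝ} (hD : ∀ t, 0 ≤ D t) (hc : c ≠ 0)
    (hx : D x = c ^ 2) (hD' : HasDerivAt D (2 * c * d) x) :
    ∃ δ : ℝ → ℝ, (∀ t, δ t ^ 2 = D t) ∧ δ x = c ∧ HasDerivAt δ d x := by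
  have hsqrt : √(D x) = |c| := by rw [hx, Real.sqrt_sq_eq_abs]
  refine ⟨fun t => c / |c| * √(D t), fun t => ?_, ?_, ?_⟩
  · rw [mul_pow, Real.sq_sqrt (hD t), div_pow, sq_abs, div_self (pow_ne_zero 2 hc), one_mul]
  · simp only [hsqrt]
    rw [div_mul_cancel₀ _ (abs_ne_zero.2 hc)]
  · refine ((hD'.sqrt (hx ▸ pow_ne_zero 2 hc)).const_mul (c / |c|)).congr_deriv ?_
    have : |c| ≠ 0 := abs_ne_zero.2 hc
    rw [hsqrt]
    field_simp
    rw [sq_abs]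

theorem isHermitian_diagonal_add_smul {n : Type*} [DecidableEq n] (a : n → ℝ) {H : Matrix n n ℂ}
    (hH : H.IsHermitian) (t : ℝ) : ((diagonal fun i => (a i : ℂ)) + t • H).IsHermitian :=
  (isHermitian_diagonal_ofReal a).add (hH.smul (IsSelfAdjoint.all t))

theorem exists_hasDerivAt_eigenvalues {a : Fin 2 → ℝ} (ha : a.Injective)
    {H : Matrix (Fin 2) (Fin 2) ℂ} (hH : H.IsHermitian) :
    ∃ β : Fin 2 → ℝ → ℝ, (∀ i, β i 0 = a i) ∧ (∀ i, HasDerivAt (β i) (H i i).re 0) ∧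
      ∀ i k, i ≠ k → ∀ t : ℝ,
        spectrum ℝ ((diagonal fun i => (a i : ℂ)) + t • H) ⊆ {β i t, β k t} := by
  let γ : Fin 2 → ℝ → ℝ := fun i t => a i + t * (H i i).re
  have hγ : ∀ i, γ i 0 = a i := fun i => by simp [γ]
  have hγ' : ∀ i, HasDerivAt (γ i) (H i i).re 0 := fun i =>
    (((hasDerivAt_id (0 : ℝ)).mul_const _).const_add _).congr_deriv (one_mul _)
  have hdisc : HasDerivAt (fun t => (γ 0 t - γ 1 t) ^ 2 + 4 * (t ^ 2 * Complex.normSq (H 0 1)))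
      (2 * (a 0 - a 1) * ((H 0 0).re - (H 1 1).re)) 0 :=
    ((((hγ' 0).sub (hγ' 1)).pow 2).add
      (((hasDerivAt_pow 2 (0 : ℝ)).mul_const _).const_mul 4)).congr_deriv (by simp [hγ])
  obtain ⟨δ, hδ, hδ₀, hδ'⟩ := exists_hasDerivAt_sq_eq
    (fun t => add_nonneg (sq_nonneg _)
      (mul_nonneg zero_le_four (mul_nonneg (sq_nonneg t) (Complex.normSq_nonneg _))))
    (sub_ne_zero.2 (ha.ne zero_ne_one)) (by simp [hγ]) hdisc
  have hspec : ∀ t : ℝ, spectrum ℝ ((diagonal fun i => (a i : ℂ)) + t • H) ⊆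
      {(γ 0 t + γ 1 t + δ t) / 2, (γ 0 t + γ 1 t - δ t) / 2} := fun t => by
    have hre : ∀ i, (((diagonal fun i => (a i : ℂ)) + t • H) i i).re = γ i t := by simp [γ]
    have hoff : Complex.normSq (((diagonal fun i => (a i : ℂ)) + t • H) 0 1) =
        t ^ 2 * Complex.normSq (H 0 1) := by simp [sq]
    rw [← hre, ← hre]
    exact spectrum_fin_two_subset_of_sq_eq_discr (isHermitian_diagonal_add_smul a hH t)
      (by rw [hδ, hre, hre, hoff])
  refine ⟨![fun t => (γ 0 t + γ 1 t + δ t) / 2, fun t => (γ 0 t + γ 1 t - δ t) / 2],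
    Fin.forall_fin_two.2 ⟨by simp [hγ, hδ₀], by simp [hγ, hδ₀]⟩, Fin.forall_fin_two.2 ⟨?_, ?_⟩,
    fun i k hik t => ?_⟩
  · exact ((((hγ' 0).add (hγ' 1)).add hδ').div_const 2).congr_deriv (by ring)
  · exact ((((hγ' 0).add (hγ' 1)).sub hδ').div_const 2).congr_deriv (by ring)
  · fin_cases i <;> fin_cases k
    · exact absurd rfl hik
    · exact hspec t
    · exact (hspec t).trans (Set.pair_comm _ _).subset
    · exact absurd rfl hik

section LoewnerMatrix

/-- The Loewner matrix of `g` at the points `a`: its entries are the divided differences of `g`,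
with `dslope` supplying the derivative wherever two points coincide. -/
noncomputable def loewnerMatrix {n : Type*} (g : ℝ → ℝ) (a : n → ℝ) : Matrix n n ℂ :=
  of fun i j => ((dslope g (a i) (a j) : ℝ) : ℂ)

variable {n : Type*} (g : ℝ → ℝ) (a : n → ℝ)

theorem loewnerMatrix_apply_self (i : n) : loewnerMatrix g a i i = deriv g (a i) := by
  rw [loewnerMatrix, of_apply, dslope_same]

theorem loewnerMatrix_apply_of_ne {i j : n} (h : a i ≠ a j) :
    loewnerMatrix g a i j = slope g (a i) (a j) := by
  rw [loewnerMatrix, of_apply, dslope_of_ne _ h.symm]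

theorem loewnerMatrix_apply_comm (i j : n) : loewnerMatrix g a i j = loewnerMatrix g a j i := by
  obtain h | h := eq_or_ne (a i) (a j)
  · rw [loewnerMatrix, of_apply, of_apply, h]
  · rw [loewnerMatrix_apply_of_ne g a h, loewnerMatrix_apply_of_ne g a h.symm, slope_comm]

theorem isHermitian_loewnerMatrix : (loewnerMatrix g a).IsHermitian :=
  IsHermitian.ext fun i j => by
    rw [loewnerMatrix_apply_comm]
    exact Complex.conj_ofReal _

end LoewnerMatrix

theorem cfc_diagonal_add_smul_apply {n : Type*} [Fintype n] [DecidableEq n] {a : n → ℝ}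
    {H : Matrix n n ℂ} (hH : H.IsHermitian) (g : ℝ → ℝ) {t x y : ℝ}
    (hspec : spectrum ℝ ((diagonal fun i => (a i : ℂ)) + t • H) ⊆ {x, y}) (i j : n) :
    cfc g ((diagonal fun i => (a i : ℂ)) + t • H) i j =
      g x • (1 : Matrix n n ℂ) i j + slope g x y •
        ((a i - x) • (1 : Matrix n n ℂ) i j + t • H i j) := by
  rw [cfc_eq_newton_interpolation (isHermitian_diagonal_add_smul a hH t).isSelfAdjoint hspec g]
  obtain rfl | hij := eq_or_ne i j
  · simp [Algebra.algebraMap_eq_smul_one, add_sub_right_comm]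
  · simp [Algebra.algebraMap_eq_smul_one, hij]

-- The Daleckii–Krein formula. In the Newton form of `cfc_diagonal_add_smul_apply` the factor of the
-- slope vanishes at `t = 0`, so the derivative of the slope never enters.
theorem hasDerivAt_cfc_diagonal_add_smul {g : ℝ → ℝ} {a : Fin 2 → ℝ} (ha : a.Injective)
    (hg : ∀ i, DifferentiableAt ℝ g (a i)) {H : Matrix (Fin 2) (Fin 2) ℂ} (hH : H.IsHermitian)
    (i j : Fin 2) :
    HasDerivAt (fun t : ℝ => cfc g ((diagonal fun i => (a i : ℂ)) + t • H) i j)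
      ((loewnerMatrix g a ⊙ H) i j) 0 := by
  obtain ⟨β, hβ, hβ', hspec⟩ := exists_hasDerivAt_eigenvalues ha hH
  obtain ⟨k, hik, hkj⟩ : ∃ k, i ≠ k ∧ (i ≠ j → k = j) := by
    fin_cases i <;> fin_cases j <;> simp
  have hgβ : ∀ i, HasDerivAt (fun t => g (β i t)) (deriv g (a i) * (H i i).re) 0 := fun i =>
    HasDerivAt.comp 0 (by rw [hβ]; exact (hg i).hasDerivAt) (hβ' i)
  have hslope : DifferentiableAt ℝ (fun t => slope g (β i t) (β k t)) 0 := by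
    simp only [slope_def_field]
    exact ((hgβ k).sub (hgβ i)).differentiableAt.div ((hβ' k).sub (hβ' i)).differentiableAt
      (by simpa [hβ, sub_eq_zero] using ha.ne hik.symm)
  have hremainder := (((hβ' i).const_sub (a i)).smul_const
    ((1 : Matrix (Fin 2) (Fin 2) ℂ) i j)).add ((hasDerivAt_id (0 : ℝ)).smul_const (H i j))
  simp only [fun t => cfc_diagonal_add_smul_apply hH g (hspec i k hik t) i j]
  refine (((hgβ i).smul_const _).add (hslope.hasDerivAt.smul hremainder)).congr_deriv ?_
  obtain rfl | hij := eq_or_ne i j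
  · have hre : ((H i i).re : ℂ) = H i i := hH.coe_re_apply_self i
    simp [loewnerMatrix_apply_self, hβ, hre]
  · obtain rfl := hkj hij
    simp [loewnerMatrix_apply_of_ne g a (ha.ne hij), hβ, hij]

/-- The trace inequality `φ(A) ≤ φ(f(A)^{1/2} g(B) f(A)^{1/2})` for all positive definite `A ≤ B`,
where the functional `φ` is encoded by its density `W`, that is `φ(X) = Tr(W X)`. -/
def TraceProperty {n : Type*} [Fintype n] [DecidableEq n] (W : Matrix n n ℂ) (f g : ℝ → ℝ) :
    Prop :=
  ∀ A B : Matrix n n ℂ, A.PosDef → B.PosDef → (B - A).PosSemidef →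
    (W * A).trace ≤
      (W * (cfc (fun t => √(f t)) A * cfc g B * cfc (fun t => √(f t)) A)).trace

namespace TraceProperty

theorem conj_unitary {n : Type*} [Fintype n] [DecidableEq n] {W : Matrix n n ℂ} {f g : ℝ → ℝ}
    (h : TraceProperty W f g) {U : Matrix n n ℂ} (hU : U ∈ unitaryGroup n ℂ) :
    TraceProperty (Uᴴ * W * U) f g := by
  intro A B hA hB hAB
  have hUU : Uᴴ * U = 1 := mem_unitaryGroup_iff'.1 hU
  have hinj : Function.Injective U.vecMul :=
    vecMul_injective_of_isUnit (IsUnit.of_mul_eq_one_right _ hUU)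
  have htrace : ∀ X : Matrix n n ℂ,
      (Uᴴ * W * U * X).trace = (W * (U * X * Uᴴ)).trace := fun X => by
    rw [Matrix.mul_assoc, Matrix.mul_assoc, trace_mul_comm]
    simp only [Matrix.mul_assoc]
  have hconj := h (U * A * Uᴴ) (U * B * Uᴴ) (hA.mul_mul_conjTranspose_same hinj)
    (hB.mul_mul_conjTranspose_same hinj) (by
      simpa only [Matrix.mul_sub, Matrix.sub_mul] using hAB.mul_mul_conjTranspose_same U)
  rw [cfc_mul_mul_conjTranspose hU _ hA.1, cfc_mul_mul_conjTranspose hU _ hB.1] at hconj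
  rw [htrace, htrace]
  convert hconj using 3
  simp only [Matrix.mul_assoc]
  simp only [← Matrix.mul_assoc Uᴴ U, hUU, Matrix.one_mul]

variable {W : Matrix (Fin 2) (Fin 2) ℂ} {f g : ℝ → ℝ} {a : Fin 2 → ℝ}

theorem trace_loewnerMatrix_nonneg (h : TraceProperty W f g) (ha : a.Injective)
    (ha₀ : ∀ i, 0 < a i) (hf : ∀ i, 0 < f (a i)) (hfg : ∀ i, g (a i) = a i / f (a i))
    (hg : ∀ i, DifferentiableAt ℝ g (a i)) {H : Matrix (Fin 2) (Fin 2) ℂ} (hH : H.PosSemidef) :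
    0 ≤ (W * ((diagonal fun i => (√(f (a i)) : ℂ)) * (loewnerMatrix g a ⊙ H) *
      diagonal fun i => (√(f (a i)) : ℂ))).trace := by
  set D : Matrix (Fin 2) (Fin 2) ℂ := diagonal fun i => (√(f (a i)) : ℂ)
  set A : Matrix (Fin 2) (Fin 2) ℂ := diagonal fun i => (a i : ℂ)
  have hA : A.PosDef := .diagonal fun i => Complex.zero_lt_real.2 (ha₀ i)
  have hD : cfc (fun t => √(f t)) A = D := cfc_diagonal_ofReal _ a
  have hbase : D * cfc g A * D = A := by
    rw [cfc_diagonal_ofReal, diagonal_mul_diagonal, diagonal_mul_diagonal]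
    refine congrArg diagonal (funext fun i => ?_)
    norm_cast
    rw [hfg, mul_right_comm, Real.mul_self_sqrt (hf i).le, mul_div_cancel₀ _ (hf i).ne']
  have hderiv : HasDerivAt (fun t : ℝ => (W * (D * cfc g (A + t • H) * D)).trace)
      (W * (D * (loewnerMatrix g a ⊙ H) * D)).trace 0 := by
    simp only [Matrix.trace, diag_apply, Matrix.mul_apply (M := W), D, diagonal_mul, mul_diagonal]
    refine .fun_sum fun i _ => .fun_sum fun j _ => ?_
    exact (((hasDerivAt_cfc_diagonal_add_smul ha hg hH.1 j i).const_mul _).mul_const _).const_mul _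
  refine nonneg_of_hasDerivAt_of_forall_le hderiv fun t ht => ?_
  have htH : (t • H).PosSemidef := hH.smul ht.le
  simpa [hD, hbase] using h A (A + t • H) hA (hA.add_posSemidef htH) (by simpa using htH)

theorem posSemidef_hadamard_loewnerMatrix (h : TraceProperty W f g) (hW : W.IsHermitian)
    (ha : a.Injective) (ha₀ : ∀ i, 0 < a i) (hf : ∀ i, 0 < f (a i))
    (hfg : ∀ i, g (a i) = a i / f (a i)) (hg : ∀ i, DifferentiableAt ℝ g (a i)) :
    (W ⊙ loewnerMatrix g a).PosSemidef := by
  refine .of_dotProduct_mulVec_nonneg (hW.hadamard (isHermitian_loewnerMatrix g a)) fun x => ?_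
  set y : Fin 2 → ℂ := fun i => x i / √(f (a i))
  convert h.trace_loewnerMatrix_nonneg ha ha₀ hf hfg hg (posSemidef_vecMulVec_self_star y) using 1
  have hu : ∀ i, (√(f (a i)) : ℂ) ≠ 0 := fun i => by exact_mod_cast (Real.sqrt_pos.2 (hf i)).ne'
  simp only [Matrix.trace, dotProduct, mulVec, diag_apply, Matrix.mul_apply (M := W), diagonal_mul,
    mul_diagonal, Finset.mul_sum, hadamard_apply, vecMulVec_apply, y, Pi.star_apply, star_div₀,
    RCLike.star_def, Complex.conj_ofReal]
  refine Finset.sum_congr rfl fun i _ => Finset.sum_congr rfl fun j _ => ?_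
  rw [loewnerMatrix_apply_comm g a j i]
  field_simp [hu i, hu j]

theorem normSq_mul_slope_sq_le (h : TraceProperty W f g) (hW : W.IsHermitian)
    (ha : a.Injective) (ha₀ : ∀ i, 0 < a i) (hf : ∀ i, 0 < f (a i))
    (hfg : ∀ i, g (a i) = a i / f (a i)) (hg : ∀ i, DifferentiableAt ℝ g (a i)) :
    Complex.normSq (W 0 1) * slope g (a 0) (a 1) ^ 2 ≤
      (W 0 0).re * (W 1 1).re * (deriv g (a 0) * deriv g (a 1)) := by
  have hdet := (h.posSemidef_hadamard_loewnerMatrix hW ha ha₀ hf hfg hg).det_nonneg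
  have h00 : ((W 0 0).re : ℂ) = W 0 0 := hW.coe_re_apply_self 0
  have h11 : ((W 1 1).re : ℂ) = W 1 1 := hW.coe_re_apply_self 1
  have hslope : loewnerMatrix g a 0 1 = slope g (a 0) (a 1) :=
    loewnerMatrix_apply_of_ne g a (ha.ne zero_ne_one)
  rw [← sub_nonneg, ← Complex.zero_le_real]
  convert hdet using 1
  rw [det_fin_two]
  simp only [hadamard_apply, loewnerMatrix_apply_self, loewnerMatrix_apply_comm g a 1 0, hslope]
  push_cast
  rw [h00, h11, ← mul_apply_swap_of_isHermitian hW]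
  ring

end TraceProperty

/-- The unitary `2^{-1/2} [[1, 1], [1, -1]]`, which conjugates diagonal matrices to matrices with
constant diagonal. -/
noncomputable def hadamardUnitary : Matrix (Fin 2) (Fin 2) ℂ :=
  ((√2)⁻¹ : ℝ) • !![1, 1; 1, -1]

theorem hadamardUnitary_conjTranspose : hadamardUnitaryᴴ = hadamardUnitary := by
  ext i j
  fin_cases i <;> fin_cases j <;> simp [hadamardUnitary]

theorem hadamardUnitary_conj_diagonal (p q : ℂ) :
    hadamardUnitary * diagonal ![p, q] * hadamardUnitary =
      !![(p + q) / 2, (p - q) / 2; (p - q) / 2, (p + q) / 2] := by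
  have h2 : (√2)⁻¹ * (√2)⁻¹ = (2 : ℝ)⁻¹ := by rw [← mul_inv, Real.mul_self_sqrt zero_le_two]
  rw [hadamardUnitary, smul_mul_assoc, smul_mul_assoc, mul_smul_comm, smul_smul, h2]
  ext i j
  rw [Matrix.smul_apply, Matrix.mul_apply, Fin.sum_univ_two, mul_diagonal, mul_diagonal,
    Complex.real_smul, Complex.ofReal_inv, Complex.ofReal_ofNat, inv_mul_eq_div]
  fin_cases i <;> fin_cases j <;> simp [sub_eq_add_neg]

theorem hadamardUnitary_mem_unitaryGroup : hadamardUnitary ∈ unitaryGroup (Fin 2) ℂ := by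
  have hone : ![(1 : ℂ), 1] = fun _ => 1 := by simp [← List.ofFn_inj]
  have hconj := hadamardUnitary_conj_diagonal 1 1
  rw [hone, diagonal_one, mul_one] at hconj
  rw [mem_unitaryGroup_iff, star_eq_conjTranspose, hadamardUnitary_conjTranspose, hconj,
    one_fin_two]
  simp

theorem abs_mul_abs_sub_le_of_sq_mul_slope_sq_le {g : ℝ → ℝ} {x y c d r : ℝ} (hyx : y ≤ x)
    (h : c ^ 2 * slope g x y ^ 2 ≤ d ^ 2 * r) :
    |c| * |g x - g y| ≤ |d| * (√r * (x - y)) := by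
  have hslope : |c| * |slope g x y| ≤ |d| * √r := by
    rw [← abs_mul, ← Real.sqrt_sq_eq_abs d, ← Real.sqrt_mul (sq_nonneg d)]
    exact Real.abs_le_sqrt (by rwa [mul_pow])
  have hdiff : g x - g y = slope g x y * (x - y) := by
    rw [← neg_sub (g y), ← neg_sub y, mul_neg, mul_comm, ← smul_eq_mul, sub_smul_slope, vsub_eq_sub]
  calc |c| * |g x - g y| = |c| * |slope g x y| * (x - y) := by
        rw [hdiff, abs_mul, abs_of_nonneg (sub_nonneg.2 hyx), mul_assoc]
    _ ≤ |d| * √r * (x - y) := mul_le_mul_of_nonneg_right hslope (sub_nonneg.2 hyx)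
    _ = |d| * (√r * (x - y)) := mul_assoc _ _ _

theorem TraceProperty.sq_mul_slope_sq_le {p q : ℝ} {f g : ℝ → ℝ}
    (h : TraceProperty (diagonal ![(p : ℂ), q]) f g) {a : Fin 2 → ℝ} (ha : a.Injective)
    (ha₀ : ∀ i, 0 < a i) (hf : ∀ i, 0 < f (a i)) (hfg : ∀ i, g (a i) = a i / f (a i))
    (hg : ∀ i, DifferentiableAt ℝ g (a i)) :
    (p - q) ^ 2 * slope g (a 0) (a 1) ^ 2 ≤ (p + q) ^ 2 * (deriv g (a 0) * deriv g (a 1)) := by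
  have hrot := h.conj_unitary hadamardUnitary_mem_unitaryGroup
  rw [hadamardUnitary_conjTranspose, hadamardUnitary_conj_diagonal, ← Complex.ofReal_add,
    ← Complex.ofReal_sub] at hrot
  have hherm : !![((p + q : ℝ) / 2 : ℂ), (p - q : ℝ) / 2;
      (p - q : ℝ) / 2, (p + q : ℝ) / 2].IsHermitian := by
    ext i j
    fin_cases i <;> fin_cases j <;> simp
  have hrotated : ((p - q) / 2) ^ 2 * slope g (a 0) (a 1) ^ 2 ≤
      (p + q) / 2 * ((p + q) / 2) * (deriv g (a 0) * deriv g (a 1)) := by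
    have hoff : Complex.normSq ((p - q : ℝ) / 2) = ((p - q) / 2) ^ 2 := by
      rw [← Complex.ofReal_ofNat, ← Complex.ofReal_div, Complex.normSq_ofReal, sq]
    convert hrot.normSq_mul_slope_sq_le hherm ha ha₀ hf hfg hg using 2
    · exact hoff.symm
    · simp
  linear_combination 4 * hrotated

theorem trace_property_necessary_condition_general (f g : ℝ → ℝ)
    (hfpos : ∀ t : ℝ, 0 < t → 0 < f t) (hg : ∀ t : ℝ, 0 < t → g t = t / f t)
    (hgd : ∀ t : ℝ, 0 < t → DifferentiableAt ℝ g t) (p q : ℝ)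
    (hineq : TraceProperty (diagonal ![(p : ℂ), q]) f g) {lam mu : ℝ} (hmu : 0 < mu)
    (hlt : mu < lam) :
    |p - q| * |g lam - g mu| ≤ |p + q| * (√(deriv g lam * deriv g mu) * (lam - mu)) := by
  have hpos : ∀ i, 0 < ![lam, mu] i := Fin.forall_fin_two.2 ⟨hmu.trans hlt, hmu⟩
  have hinj : Function.Injective ![lam, mu] := injective_pair_iff_ne.2 hlt.ne'
  exact abs_mul_abs_sub_le_of_sq_mul_slope_sq_le hlt.le <|
    hineq.sq_mul_slope_sq_le hinj hpos (fun i => hfpos _ (hpos i)) (fun i => hg _ (hpos i))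
      fun i => hgd _ (hpos i)

/-- Let `f` be strictly positive and continuous on `(0, ∞)` and `g(t) = t / f(t)` be
differentiable on `(0, ∞)`.  Fix `s ∈ [0, 1]` and let `φ(X) = Tr(diag(s, 1) · X)` on
`M₂(ℂ)`.  If `φ(A) ≤ φ(f(A)^{1/2} g(B) f(A)^{1/2})` for all positive definite Hermitian
`A ≤ B` in `M₂(ℂ)`, then for all `λ > μ > 0`:
`√(g'(λ) g'(μ)) (λ − μ) ≥ ((1 − s)/(1 + s)) (g(λ) − g(μ))`. -/
theorem trace_property_necessary_condition
    (f : ℝ → ℝ)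
    (hfc : ContinuousOn f (Set.Ioi 0))
    (hfpos : ∀ t : ℝ, 0 < t → 0 < f t)
    (g : ℝ → ℝ)
    (hg : ∀ t : ℝ, 0 < t → g t = t / f t)
    (hgd : ∀ t : ℝ, 0 < t → DifferentiableAt ℝ g t)
    (s : ℝ) (hs : s ∈ Set.Icc (0 : ℝ) 1)
    (hineq : ∀ A B : Matrix (Fin 2) (Fin 2) ℂ, A.PosDef → B.PosDef →
      (B - A).PosSemidef →
      (Matrix.diagonal ![(s : ℂ), 1] * A).trace ≤
        (Matrix.diagonal ![(s : ℂ), 1] *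
          (cfc (fun t => Real.sqrt (f t)) A * cfc g B *
            cfc (fun t => Real.sqrt (f t)) A)).trace) :
    ∀ lam mu : ℝ, 0 < mu → mu < lam →
      Real.sqrt (deriv g lam * deriv g mu) * (lam - mu) ≥
        ((1 - s) / (1 + s)) * (g lam - g mu) := by
  intro lam mu hmu hlt
  have hs₁ : 0 < 1 + s := add_pos_of_pos_of_nonneg one_pos hs.1
  have hmain := trace_property_necessary_condition_general f g hfpos hg hgd s 1
    (by rwa [Complex.ofReal_one]) hmu hlt
  rw [abs_sub_comm, add_comm s, abs_of_pos hs₁, ← abs_mul] at hmain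
  rw [ge_iff_le, div_mul_eq_mul_div, div_le_iff₀' hs₁]
  exact (le_abs_self _).trans hmain
end
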